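/- Let a and b be positive integers and set m := a² + ab + b². Define the theta-quark θ_{a,b}(τ,z) := θ(τ,az)·θ(τ,bz)·θ(τ,(a+b)z)/η(τ) on ℍ × ℂ. Then θ_{a,b} is a holomorphic Jacobi form (in the sense of Eichler–Zagier) of weight 1 and index m with character v_η^8: (i) θ_{a,b}((ατ+β)/(γτ+δ), z/(γτ+δ)) = v_η^8(A)·(γτ+δ)·exp(2πi m γz²/(γτ+δ))·θ_{a,b}(τ,z) for all A = (α,β;γ,δ) ∈ SL₂(ℤ); (ii) θ_{a,b}(τ, z+λτ+μ) = exp(−2πi m(λ²τ + 2λz))·θ_{a,b}(τ,z) for all λ,μ ∈ ℤ; (iii) θ_{a,b} is holomorphic on ℍ×ℂ and its Fourier expansion θ_{a,b}(τ,z) = Σ c(n,r)·exp(2πi(nτ+rz)), with n ∈ ℚ, n ≥ 0, r ∈ (1/2)ℤ, satisfies 4nm − r² ≥ 0 whenever c(n,r) ≠ 0. Moreover, if a ≢ b (mod 3) then θ_{a,b} is a Jacobi cusp form: 4nm − r² > 0 whenever c(n,r) ≠ 0. -/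

import Mathlib

open Complex Matrix
open scoped Real BigOperators Classical

noncomputable section

abbrev SL2Z := Matrix.SpecialLinearGroup (Fin 2) ℤ

/-- The integral bilinear form attached to a Gram matrix `S`. -/
def bilinZ {ι : Type*} [Fintype ι] (S : Matrix ι ι ℤ) (x y : ι → ℤ) : ℤ :=
  ∑ i, ∑ j, x i * S i j * y j

def bilinQ {ι : Type*} [Fintype ι] (S : Matrix ι ι ℤ) (x y : ι → ℚ) : ℚ :=
  ∑ i, ∑ j, x i * (S i j : ℚ) * y j

def bilinR {ι : Type*} [Fintype ι] (S : Matrix ι ι ℤ) (x y : ι → ℝ) : ℝ :=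
  ∑ i, ∑ j, x i * (S i j : ℝ) * y j

def bilinC {ι : Type*} [Fintype ι] (S : Matrix ι ι ℤ) (x y : ι → ℂ) : ℂ :=
  ∑ i, ∑ j, x i * (S i j : ℂ) * y j

/-- `S` is the Gram matrix of an even positive definite lattice. -/
structure IsEvenPosDef {ι : Type*} [Fintype ι] (S : Matrix ι ι ℤ) : Prop where
  symm : S.IsSymm
  posdef : ∀ x : ι → ℚ, x ≠ 0 → 0 < bilinQ S x x
  even_diag : ∀ i, (2 : ℤ) ∣ S i i

/-- `l ∈ (1/2) L^∨`, written in lattice coordinates:  `2(l,x) ∈ ℤ` for every lattice vector. -/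
def InHalfDual {ι : Type*} [Fintype ι] (S : Matrix ι ι ℤ) (l : ι → ℚ) : Prop :=
  ∀ x : ι → ℤ, ∃ m : ℤ, 2 * bilinQ S l (fun i => (x i : ℚ)) = m

/-- `φ` is a holomorphic Jacobi form of weight `k` and index `t` for the lattice `(ℤ^ι, S)`
with `SL₂(ℤ)`-character (multiplier system) `χ`, Heisenberg character `ν`,
and Fourier coefficients `f`. -/
structure IsJacobiForm {ι : Type*} [Fintype ι] (S : Matrix ι ι ℤ) (k t : ℚ)
    (χ : SL2Z → ℂ) (ν : (ι → ℤ) → (ι → ℤ) → ℂ)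
    (f : ℚ × (ι → ℚ) → ℂ) (φ : ℂ → (ι → ℂ) → ℂ) : Prop where
  holo : DifferentiableOn ℂ (fun p : ℂ × (ι → ℂ) => φ p.1 p.2) {p | 0 < p.1.im}
  modular : ∀ A : SL2Z, ∀ τ : ℂ, 0 < τ.im → ∀ z : ι → ℂ,
    φ (((A.1 0 0 : ℂ) * τ + (A.1 0 1 : ℂ)) / ((A.1 1 0 : ℂ) * τ + (A.1 1 1 : ℂ)))
        (fun i => z i / ((A.1 1 0 : ℂ) * τ + (A.1 1 1 : ℂ)))
      = χ A * ((A.1 1 0 : ℂ) * τ + (A.1 1 1 : ℂ)) ^ (k : ℂ)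
        * Complex.exp ((π : ℂ) * I * (t : ℂ) * (A.1 1 0 : ℂ) * bilinC S z z
            / ((A.1 1 0 : ℂ) * τ + (A.1 1 1 : ℂ)))
        * φ τ z
  elliptic : ∀ x y : ι → ℤ, ∀ τ : ℂ, 0 < τ.im → ∀ z : ι → ℂ,
    φ τ (fun i => z i + (x i : ℂ) * τ + (y i : ℂ))
      = ν x y * Complex.exp (-((π : ℂ) * I * (t : ℂ))
            * ((bilinZ S x x : ℂ) * τ + 2 * bilinC S (fun i => (x i : ℂ)) z))
        * φ τ z
  support : ∀ p : ℚ × (ι → ℚ), f p ≠ 0 →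
    0 ≤ p.1 ∧ InHalfDual S p.2 ∧ 0 ≤ 2 * p.1 * t - bilinQ S p.2 p.2
  expansion : ∀ τ : ℂ, 0 < τ.im → ∀ z : ι → ℂ,
    HasSum (fun p : ℚ × (ι → ℚ) =>
        f p * Complex.exp (2 * (π : ℂ) * I *
          ((p.1 : ℂ) * τ + bilinC S (fun i => (p.2 i : ℂ)) z))) (φ τ z)

/-- The Fourier coefficients `f` are supported on indices of positive hyperbolic norm
(cusp form condition). -/
def IsCuspSupport {ι : Type*} [Fintype ι] (S : Matrix ι ι ℤ) (t : ℚ)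
    (f : ℚ × (ι → ℚ) → ℂ) : Prop :=
  ∀ p : ℚ × (ι → ℚ), f p ≠ 0 → 0 < 2 * p.1 * t - bilinQ S p.2 p.2

/-- `c` is a root of unity. -/
def HasFiniteOrder (c : ℂ) : Prop := ∃ N : ℕ, 0 < N ∧ c ^ N = 1

/-- The quadratic character mod 4. -/
def chi4 (n : ℤ) : ℂ := if n % 4 = 1 then 1 else if n % 4 = 3 then -1 else 0

/-- The classical Jacobi theta-series of characteristic `(1/2,1/2)`. -/
def jtheta (τ z : ℂ) : ℂ :=
  ∑' n : ℤ, chi4 n *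
    Complex.exp (2 * (π : ℂ) * I * (((n : ℂ) ^ 2 * τ) / 8 + (n : ℂ) * z / 2))

/-- The Dedekind eta function. -/
def dedekindEta (τ : ℂ) : ℂ :=
  Complex.exp ((π : ℂ) * I * τ / 12) *
    ∏' n : ℕ, (1 - Complex.exp (2 * (π : ℂ) * I * ((n : ℂ) + 1) * τ))

/-- The theta-quark `θ_{a,b}(τ,z) = θ(τ,az)θ(τ,bz)θ(τ,(a+b)z)/η(τ)`. -/
def thetaQuark (a b : ℤ) (τ z : ℂ) : ℂ :=
  jtheta τ ((a : ℂ) * z) * jtheta τ ((b : ℂ) * z) * jtheta τ (((a : ℂ) + (b : ℂ)) * z)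
    / dedekindEta τ

/-!
The quotient `φ = ϑ/η³` is invariant under `SL₂(ℤ)` in weight `-1` and index `1/2`, with trivial
multiplier, as one checks on the generators `S` and `T`. Since
`θ_{a,b}(τ, z) = η(τ)⁸ φ(τ, az) φ(τ, bz) φ(τ, (a+b)z)`, the theta-quark has multiplier `v_η⁸`,
weight `4 - 3 = 1` and index `(a² + b² + (a+b)²)/2 = a² + ab + b²`.

The Fourier expansion is the denominator identity of the affine root system of type `A₂`,
`ϑ(w₁) ϑ(w₂) ϑ(w₁+w₂) / η = -∑ ((x+y)/3) q^{(x²-xy+y²)/3} e^{2πi(x w₁ + y w₂)}`, where `(·/3)` is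
the Legendre symbol. Summing the triple product of theta series along the lines on which the
exponents of `w₁` and `w₂` are constant leaves partial theta series which are multiples of `η` by
Euler's pentagonal number theorem. At `(w₁, w₂) = (az, bz)` the term `(x, y)` has hyperbolic norm
`4nm - r² = ((a+2b)x - (2a+b)y)²/3 ≥ 0`. If it vanishes, then `3 ∣ (a-b)(x+y)`, whereas a nonzero
coefficient forces `3 ∤ x+y`, hence `a ≡ b (mod 3)`.
-/

section Pentagonal

open Filter Topology Finset

lemma natAbs_le_pentagonal (k : ℤ) : k.natAbs ≤ pentagonal k := by
  have hk := two_mul_natCast_pentagonal k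
  zify
  rcases abs_cases k with ⟨habs, _⟩ | ⟨habs, _⟩ <;> rw [habs] <;> nlinarith

variable {R : Type*} [NormedCommRing R] [NormOneClass R] {x : R}

lemma norm_negOnePow (k : ℤ) : ‖(Int.negOnePow k : R)‖ = 1 := by
  rcases Int.even_or_odd k with hk | hk
  · simp [Int.negOnePow_even k hk]
  · simp [Int.negOnePow_odd k hk]

lemma norm_pow_le_pow_norm_of_le (hx : ‖x‖ < 1) {m n : ℕ} (hmn : m ≤ n) : ‖x ^ n‖ ≤ ‖x‖ ^ m :=
  (norm_pow_le x n).trans (pow_le_pow_of_le_one (norm_nonneg x) hx.le hmn)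

lemma norm_prod_one_sub_pow_le (hx : ‖x‖ < 1) (k n : ℕ) :
    ‖∏ i ∈ range n, (1 - x ^ (k + i + 1))‖ ≤ Real.exp (∑' i : ℕ, ‖x‖ ^ i) := by
  have hsum : ∑ i ∈ range n, ‖-x ^ (k + i + 1)‖ ≤ ∑' i : ℕ, ‖x‖ ^ i :=
    calc ∑ i ∈ range n, ‖-x ^ (k + i + 1)‖
        ≤ ∑ i ∈ range n, ‖x‖ ^ i := sum_le_sum fun i _ => by
          rw [norm_neg]; exact norm_pow_le_pow_norm_of_le hx (by lia)
      _ ≤ ∑' i : ℕ, ‖x‖ ^ i :=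
          (summable_geometric_of_lt_one (norm_nonneg x) hx).sum_le_tsum _ fun _ _ => by positivity
  have hprod := (range n).norm_prod_one_add_sub_one_le fun i => -x ^ (k + i + 1)
  simp only [← sub_eq_add_neg] at hprod
  have htri := norm_le_norm_sub_add (∏ i ∈ range n, (1 - x ^ (k + i + 1))) 1
  rw [norm_one] at htri
  linarith [Real.exp_le_exp.2 hsum]

lemma norm_pow_mul_prod_one_sub_pow_le (hx : ‖x‖ < 1) (k n : ℕ) :
    ‖x ^ ((k + 1) * n) * ∏ i ∈ range (n + 1), (1 - x ^ (k + i + 1))‖ ≤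
      ‖x‖ ^ n * Real.exp (∑' i : ℕ, ‖x‖ ^ i) :=
  (norm_mul_le _ _).trans <| mul_le_mul
    (norm_pow_le_pow_norm_of_le hx (Nat.le_mul_of_pos_left n k.succ_pos))
    (norm_prod_one_sub_pow_le hx k (n + 1)) (norm_nonneg _) (by positivity)

/-- The remainder left after `k + 1` steps of Euler's recursion for `∏ (1 - xⁿ)`. -/
def pentagonalRemainder (x : R) (k : ℕ) : R :=
  (-1) ^ (k + 1) * x ^ ((k + 1) * (3 * k + 4) / 2) *
    ∑' n : ℕ, x ^ ((k + 1) * n) * ∏ i ∈ range (n + 1), (1 - x ^ (k + i + 1))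

lemma norm_pentagonalRemainder_le (hx : ‖x‖ < 1) (k : ℕ) :
    ‖pentagonalRemainder x k‖ ≤ ‖x‖ ^ k * ∑' n : ℕ, ‖x‖ ^ n * Real.exp (∑' i : ℕ, ‖x‖ ^ i) := by
  have hbound := (summable_geometric_of_lt_one (norm_nonneg x) hx).mul_right
    (Real.exp (∑' i : ℕ, ‖x‖ ^ i))
  have hexp : k ≤ (k + 1) * (3 * k + 4) / 2 := (Nat.le_div_iff_mul_le two_pos).2 (by nlinarith)
  rw [pentagonalRemainder, mul_assoc, ← Int.cast_negOnePow_natCast]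
  refine (norm_mul_le _ _).trans ?_
  rw [norm_negOnePow, one_mul]
  exact (norm_mul_le _ _).trans <| mul_le_mul (norm_pow_le_pow_norm_of_le hx hexp)
    (tsum_of_norm_bounded hbound.hasSum (norm_pow_mul_prod_one_sub_pow_le hx k))
    (norm_nonneg _) (by positivity)

lemma tendsto_pentagonalRemainder (hx : ‖x‖ < 1) :
    Tendsto (pentagonalRemainder x) atTop (𝓝 0) :=
  squeeze_zero_norm (norm_pentagonalRemainder_le hx) <| by
    simpa using (tendsto_pow_atTop_nhds_zero_of_lt_one (norm_nonneg x) hx).mul_const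
      (∑' n : ℕ, ‖x‖ ^ n * Real.exp (∑' i : ℕ, ‖x‖ ^ i))

variable [CompleteSpace R]

lemma summable_negOnePow_mul_pow_pentagonal (hx : ‖x‖ < 1) :
    Summable fun k : ℤ => (Int.negOnePow k : R) * x ^ pentagonal k := by
  have hgeom := summable_geometric_of_lt_one (norm_nonneg x) hx
  have hgeom_int : Summable fun k : ℤ => ‖x‖ ^ k.natAbs :=
    .of_nat_of_neg (by simpa using hgeom) (by simpa using hgeom)
  refine .of_norm_bounded hgeom_int fun k => ?_
  exact (norm_mul_le _ _).trans <| by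
    rw [norm_negOnePow, one_mul]; exact norm_pow_le_pow_norm_of_le hx (natAbs_le_pentagonal k)

lemma hasSum_neg_one_pow_mul_pow_pentagonal_sub (hx : ‖x‖ < 1) :
    HasSum (fun k : ℕ => (-1) ^ k * (x ^ pentagonal (-k) - x ^ pentagonal (k + 1)))
      (∑' k : ℤ, (Int.negOnePow k : R) * x ^ pentagonal k) := by
  have h := (summable_negOnePow_mul_pow_pentagonal hx).hasSum
  rw [← (Equiv.neg ℤ).hasSum_iff] at h
  convert h.nat_add_neg_add_one using 2 with k
  simp only [Function.comp, Equiv.neg_apply, neg_neg, Int.negOnePow_neg, Int.negOnePow_succ,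
    Units.val_neg, Int.cast_neg, Int.cast_negOnePow_natCast]
  ring

lemma multipliable_one_sub_pow_add (hx : ‖x‖ < 1) (k : ℕ) :
    Multipliable fun n : ℕ => 1 - x ^ (n + k + 1) := by
  have hfactors : Summable fun n : ℕ => ‖-x ^ (n + k + 1)‖ :=
    .of_nonneg_of_le (fun _ => norm_nonneg _)
      (fun n => by
        rw [norm_neg]; exact norm_pow_le_pow_norm_of_le hx (by lia : n ≤ n + k + 1))
      (summable_geometric_of_lt_one (norm_nonneg x) hx)
  simpa only [← sub_eq_add_neg] using multipliable_one_add_of_summable hfactors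

theorem hasSum_negOnePow_mul_pow_pentagonal (hx : ‖x‖ < 1) :
    HasSum (fun k : ℤ => (Int.negOnePow k : R) * x ^ pentagonal k)
      (∏' n : ℕ, (1 - x ^ (n + 1))) := by
  have hbound := (summable_geometric_of_lt_one (norm_nonneg x) hx).mul_right
    (Real.exp (∑' i : ℕ, ‖x‖ ^ i))
  have hpaired := hasSum_neg_one_pow_mul_pow_pentagonal_sub hx
  rw [Pentagonal.tprod_one_sub_pow (tendsto_pow_atTop_nhds_zero_of_norm_lt_one hx)
    (fun k => .of_norm_bounded hbound (norm_pow_mul_prod_one_sub_pow_le hx k))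
    (multipliable_one_sub_pow_add hx) hpaired.summable (tendsto_pentagonalRemainder hx),
    hpaired.tsum_eq]
  exact (summable_negOnePow_mul_pow_pentagonal hx).hasSum

end Pentagonal

section QExp

/-- The character `x ↦ e^{2πix}` of `ℂ/ℤ`, in which all expansions are written. -/
def qexp (x : ℂ) : ℂ := cexp (2 * π * I * x)

lemma qexp_add (x y : ℂ) : qexp (x + y) = qexp x * qexp y := by
  simp only [qexp, mul_add, Complex.exp_add]

lemma qexp_pow (x : ℂ) (n : ℕ) : qexp x ^ n = qexp (n * x) := by
  rw [qexp, qexp, ← Complex.exp_nat_mul]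
  ring_nf

lemma qexp_intCast (n : ℤ) : qexp n = 1 := by
  rw [qexp, mul_comm, Complex.exp_int_mul_two_pi_mul_I]

lemma qexp_add_intCast (x : ℂ) (n : ℤ) : qexp (x + n) = qexp x := by
  rw [qexp_add, qexp_intCast, mul_one]

lemma qexp_intCast_div_two (n : ℤ) : qexp (n / 2) = (-1) ^ n := by
  rw [qexp, show 2 * (π : ℂ) * I * (n / 2) = n * (π * I) by ring, Complex.exp_int_mul,
    Complex.exp_pi_mul_I]

lemma qexp_neg_one_div_four : qexp (-1 / 4) = -I := by
  rw [qexp, show 2 * (π : ℂ) * I * (-1 / 4) = -(π / 2 * I) by ring, Complex.exp_neg,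
    Complex.exp_pi_div_two_mul_I, Complex.inv_I]

lemma norm_qexp_lt_one {τ : ℂ} (hτ : 0 < τ.im) : ‖qexp τ‖ < 1 :=
  UpperHalfPlane.norm_exp_two_pi_I_lt_one ⟨τ, hτ⟩

end QExp

lemma neg_one_zpow_eq_of_even_sub {m n : ℤ} (h : Even (m - n)) : (-1 : ℂ) ^ m = (-1) ^ n := by
  rw [← Int.cast_negOnePow, ← Int.cast_negOnePow, (Int.negOnePow_eq_iff m n).2 h]

section Eta

lemma dedekindEta_eq_eta : dedekindEta = ModularForm.eta := by
  funext τ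
  simp only [dedekindEta, ModularForm.eta, ModularForm.eta_q_eq_cexp, Function.Periodic.qParam]
  congr 2
  push_cast
  ring

lemma dedekindEta_ne_zero {τ : ℂ} (hτ : 0 < τ.im) : dedekindEta τ ≠ 0 := by
  rw [dedekindEta_eq_eta]
  exact ModularForm.eta_ne_zero hτ

lemma differentiableAt_dedekindEta {τ : ℂ} (hτ : 0 < τ.im) : DifferentiableAt ℂ dedekindEta τ := by
  rw [dedekindEta_eq_eta]
  exact ModularForm.differentiableAt_eta_of_mem_upperHalfPlaneSet hτ

lemma dedekindEta_eq_qexp (τ : ℂ) :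
    dedekindEta τ = qexp (τ / 24) * ∏' n : ℕ, (1 - qexp τ ^ (n + 1)) := by
  simp only [dedekindEta, qexp_pow]
  simp only [qexp]
  push_cast
  ring_nf

lemma dedekindEta_add_one (τ : ℂ) : dedekindEta (τ + 1) = qexp (1 / 24) * dedekindEta τ := by
  have hq : qexp (τ + 1) = qexp τ := by simpa using qexp_add_intCast τ 1
  rw [dedekindEta_eq_qexp, dedekindEta_eq_qexp, hq, add_div, qexp_add]
  ring

lemma I_mul_cpow {w : ℂ} (hw : 0 < w.re) (s : ℂ) : (I * w) ^ s = I ^ s * w ^ s := by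
  have hw₀ : w ≠ 0 := by rintro rfl; simp at hw
  have harg : |w.arg| < π / 2 := Complex.abs_arg_lt_pi_div_two_iff.2 (.inl hw)
  have hlog : Complex.log (I * w) = Complex.log I + Complex.log w :=
    Complex.log_mul I_ne_zero hw₀ <| by
      rw [Complex.arg_I]
      constructor <;> linarith [abs_lt.1 harg]
  rw [cpow_def_of_ne_zero (mul_ne_zero I_ne_zero hw₀), cpow_def_of_ne_zero I_ne_zero,
    cpow_def_of_ne_zero hw₀, hlog, add_mul, Complex.exp_add]

lemma dedekindEta_neg_one_div {τ : ℂ} (hτ : 0 < τ.im) :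
    dedekindEta (-1 / τ) = (-I * τ) ^ (1 / 2 : ℂ) * dedekindEta τ := by
  have hsqrt : τ ^ (1 / 2 : ℂ) = I ^ (1 / 2 : ℂ) * (-I * τ) ^ (1 / 2 : ℂ) := by
    rw [← I_mul_cpow (by simpa using hτ), ← mul_assoc, mul_neg, I_mul_I, neg_neg, one_mul]
  have hI : I ^ (1 / 2 : ℂ) ≠ 0 := by simp [cpow_eq_zero_iff, I_ne_zero]
  have h : ModularForm.eta (-1 / τ) =
      (I ^ (1 / 2 : ℂ))⁻¹ * (τ ^ (1 / 2 : ℂ) * ModularForm.eta τ) := by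
    simpa [Complex.sqrt] using ModularForm.eta_comp_eq_csqrt_I_inv hτ
  rw [dedekindEta_eq_eta, h, hsqrt, mul_assoc, inv_mul_cancel_left₀ hI]

/-- The partial theta series `∑ₜ (-1)ᵗ q^{(6t+r)²/24}` attached to a residue `r` modulo `6`; it is
a multiple of `η` by the pentagonal number theorem. -/
def etaSeries (τ : ℂ) (r : ℤ) : ℂ := ∑' t : ℤ, (-1) ^ t * qexp (τ * (6 * t + r) ^ 2 / 24)

lemma hasSum_etaSeries {τ : ℂ} (hτ : 0 < τ.im) (r : ℤ) :
    HasSum (fun t : ℤ => (-1) ^ t * qexp (τ * (6 * t + r) ^ 2 / 24)) (etaSeries τ r) := by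
  have hτ₃ : 0 < (3 * τ).im := by simpa using hτ
  refine Summable.hasSum <| (((summable_jacobiTheta₂_term_iff (r * τ / 2 + 1 / 2) (3 * τ)).2
    hτ₃).mul_left (qexp (r ^ 2 * τ / 24))).congr fun t => ?_
  rw [← qexp_intCast_div_two, ← qexp_add, jacobiTheta₂_term, qexp, qexp, ← Complex.exp_add]
  ring_nf

lemma etaSeries_neg (τ : ℂ) (r : ℤ) : etaSeries τ (-r) = etaSeries τ r := by
  rw [etaSeries, ← (Equiv.neg ℤ).tsum_eq, etaSeries]
  refine tsum_congr fun t => ?_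
  rw [Equiv.neg_apply, neg_one_zpow_eq_of_even_sub (n := t) ⟨-t, by ring⟩]
  push_cast
  ring_nf

lemma etaSeries_add_six_mul (τ : ℂ) (r v : ℤ) :
    etaSeries τ (r + 6 * v) = (-1) ^ v * etaSeries τ r := by
  rw [etaSeries, ← (Equiv.subRight v).tsum_eq, etaSeries, ← tsum_mul_left]
  refine tsum_congr fun t => ?_
  rw [Equiv.subRight_apply, ← mul_assoc, ← zpow_add₀ (by norm_num),
    neg_one_zpow_eq_of_even_sub (n := v + t) ⟨-v, by ring⟩]
  push_cast
  ring_nf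

lemma etaSeries_three (τ : ℂ) : etaSeries τ 3 = 0 := by
  have h : etaSeries τ 3 = -etaSeries τ 3 := by
    simpa [etaSeries_neg] using etaSeries_add_six_mul τ (-3) 1
  exact self_eq_neg.1 h

lemma etaSeries_one {τ : ℂ} (hτ : 0 < τ.im) : etaSeries τ 1 = dedekindEta τ := by
  rw [dedekindEta_eq_qexp]
  refine (hasSum_etaSeries hτ 1).unique ?_
  rw [← (Equiv.neg ℤ).hasSum_iff]
  refine ((hasSum_negOnePow_mul_pow_pentagonal (norm_qexp_lt_one hτ)).mul_left _).congr_fun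
    fun k => ?_
  have hk : 2 * (pentagonal k : ℂ) = k * (3 * k - 1) := mod_cast two_mul_natCast_pentagonal k
  rw [Function.comp_apply, Equiv.neg_apply, neg_one_zpow_eq_of_even_sub (n := k) ⟨-k, by ring⟩,
    Int.cast_negOnePow, mul_left_comm, qexp_pow, ← qexp_add]
  congr 2
  push_cast
  linear_combination -τ / 2 * hk

lemma neg_one_zpow_mul_etaSeries {τ : ℂ} (hτ : 0 < τ.im) (w : ℤ) :
    (-1) ^ w * etaSeries τ (2 * w - 3) = -legendreSym 3 w * dedekindEta τ := by
  rw [legendreSym.mod]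
  obtain ⟨v, rfl | rfl | rfl⟩ : ∃ v, w = 3 * v ∨ w = 3 * v + 1 ∨ w = 3 * v + 2 :=
    ⟨w / 3, by lia⟩
  · rw [show 2 * (3 * v) - 3 = -3 + 6 * v by ring, etaSeries_add_six_mul, etaSeries_neg,
      etaSeries_three]
    simp
  · rw [show 2 * (3 * v + 1) - 3 = -1 + 6 * v by ring, etaSeries_add_six_mul, etaSeries_neg,
      etaSeries_one hτ, ← mul_assoc, ← zpow_add₀ (by norm_num),
      neg_one_zpow_eq_of_even_sub (n := 1) ⟨2 * v, by ring⟩]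
    simp
  · rw [show 2 * (3 * v + 2) - 3 = 1 + 6 * v by ring, etaSeries_add_six_mul,
      etaSeries_one hτ, ← mul_assoc, ← zpow_add₀ (by norm_num),
      neg_one_zpow_eq_of_even_sub (n := 0) ⟨2 * v + 1, by ring⟩]
    have h2 : legendreSym 3 2 = -1 := by decide
    simp [h2]

end Eta

section JacobiTheta

lemma chi4_two_mul_add_one (k : ℤ) : chi4 (2 * k + 1) = (-1) ^ k := by
  obtain ⟨j, rfl | rfl⟩ := Int.even_or_odd' k
  · rw [neg_one_zpow_eq_of_even_sub (n := 0) ⟨j, by ring⟩, chi4, if_pos (by lia), zpow_zero]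
  · rw [neg_one_zpow_eq_of_even_sub (n := 1) ⟨j, by ring⟩, chi4, if_neg (by lia),
      if_pos (by lia), zpow_one]

lemma chi4_two_mul (k : ℤ) : chi4 (2 * k) = 0 := by
  rw [chi4, if_neg (by lia), if_neg (by lia)]

lemma jtheta_eq_tsum (τ z : ℂ) :
    jtheta τ z = ∑' k : ℤ, (-1) ^ k * qexp ((2 * k + 1) ^ 2 * τ / 8 + (2 * k + 1) * z / 2) := by
  have hinj : Function.Injective fun k : ℤ => 2 * k + 1 := fun k l h => by simpa using h
  rw [jtheta, ← hinj.tsum_eq]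
  · refine tsum_congr fun k => ?_
    rw [chi4_two_mul_add_one, qexp]
    push_cast
    rfl
  · intro n hn
    obtain ⟨k, rfl | rfl⟩ := Int.even_or_odd' n
    · simp [chi4_two_mul] at hn
    · exact ⟨k, rfl⟩

lemma neg_one_zpow_mul_qexp_eq_jacobiTheta₂_term (τ z : ℂ) (k : ℤ) :
    (-1) ^ k * qexp ((2 * k + 1) ^ 2 * τ / 8 + (2 * k + 1) * z / 2) =
      qexp (τ / 8 + z / 2) * jacobiTheta₂_term k (z + τ / 2 + 1 / 2) τ := by
  rw [← qexp_intCast_div_two, ← qexp_add, jacobiTheta₂_term, qexp, qexp, ← Complex.exp_add]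
  ring_nf

lemma hasSum_jtheta {τ : ℂ} (hτ : 0 < τ.im) (z : ℂ) :
    HasSum (fun k : ℤ => (-1) ^ k * qexp ((2 * k + 1) ^ 2 * τ / 8 + (2 * k + 1) * z / 2))
      (jtheta τ z) := by
  rw [jtheta_eq_tsum]
  simp only [neg_one_zpow_mul_qexp_eq_jacobiTheta₂_term]
  exact (((summable_jacobiTheta₂_term_iff _ τ).2 hτ).mul_left _).hasSum

lemma jtheta_eq_jacobiTheta₂ (τ z : ℂ) :
    jtheta τ z = qexp (τ / 8 + z / 2) * jacobiTheta₂ (z + τ / 2 + 1 / 2) τ := by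
  rw [jtheta_eq_tsum, jacobiTheta₂, ← tsum_mul_left]
  exact tsum_congr (neg_one_zpow_mul_qexp_eq_jacobiTheta₂_term τ z)

lemma differentiableAt_jtheta {τ : ℂ} (hτ : 0 < τ.im) (z : ℂ) :
    DifferentiableAt ℂ (fun p : ℂ × ℂ => jtheta p.1 p.2) (τ, z) := by
  simp only [jtheta_eq_jacobiTheta₂, qexp]
  have h := (hasFDerivAt_jacobiTheta₂ (z + τ / 2 + 1 / 2) hτ).differentiableAt
  exact .mul (by fun_prop) <| .comp (τ, z) (g := fun p : ℂ × ℂ => jacobiTheta₂ p.1 p.2)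
    (f := fun p : ℂ × ℂ => (p.2 + p.1 / 2 + 1 / 2, p.1)) h (by fun_prop)

lemma jtheta_add_intCast (τ z : ℂ) (μ : ℤ) : jtheta τ (z + μ) = (-1) ^ μ * jtheta τ z := by
  rw [jtheta_eq_tsum, jtheta_eq_tsum, ← tsum_mul_left]
  refine tsum_congr fun k => ?_
  have harg : (2 * (k : ℂ) + 1) ^ 2 * τ / 8 + (2 * k + 1) * (z + μ) / 2 =
      (2 * k + 1) ^ 2 * τ / 8 + (2 * k + 1) * z / 2 + μ / 2 + (k * μ : ℤ) := by
    push_cast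
    ring
  rw [harg, qexp_add_intCast, qexp_add _ (μ / 2 : ℂ), qexp_intCast_div_two]
  ring

lemma jtheta_add_intCast_mul (τ z : ℂ) (l : ℤ) :
    jtheta τ (z + l * τ) = (-1) ^ l * qexp (-(l ^ 2 * τ + 2 * l * z) / 2) * jtheta τ z := by
  rw [jtheta_eq_tsum, ← (Equiv.subRight l).tsum_eq, jtheta_eq_tsum, ← tsum_mul_left]
  refine tsum_congr fun k => ?_
  rw [Equiv.subRight_apply, neg_one_zpow_eq_of_even_sub (n := l + k) ⟨-l, by ring⟩,
    zpow_add₀ (by norm_num), mul_mul_mul_comm, ← qexp_add]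
  push_cast
  ring_nf

lemma jtheta_add_lattice (τ z : ℂ) (l μ : ℤ) :
    jtheta τ (z + l * τ + μ) =
      (-1) ^ (l + μ) * qexp (-(l ^ 2 * τ + 2 * l * z) / 2) * jtheta τ z := by
  rw [jtheta_add_intCast, jtheta_add_intCast_mul, zpow_add₀ (by norm_num)]
  ring

lemma jtheta_add_one (τ z : ℂ) : jtheta (τ + 1) z = qexp (1 / 8) * jtheta τ z := by
  rw [jtheta_eq_tsum, jtheta_eq_tsum, ← tsum_mul_left]
  refine tsum_congr fun k => ?_
  obtain ⟨j, hj⟩ := Int.even_mul_succ_self k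
  have hj : (k : ℂ) * (k + 1) = j + j := mod_cast hj
  have harg : (2 * (k : ℂ) + 1) ^ 2 * (τ + 1) / 8 + (2 * k + 1) * z / 2 =
      1 / 8 + ((2 * k + 1) ^ 2 * τ / 8 + (2 * k + 1) * z / 2) + j := by
    linear_combination hj / 2
  rw [harg, qexp_add_intCast, qexp_add (1 / 8), mul_left_comm]

lemma jtheta_neg_one_div {τ : ℂ} (hτ : 0 < τ.im) (z : ℂ) :
    jtheta (-1 / τ) (z / τ) =
      -I * (-I * τ) ^ (1 / 2 : ℂ) * qexp (z ^ 2 / (2 * τ)) * jtheta τ z := by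
  have hτ₀ : τ ≠ 0 := by rintro rfl; simp at hτ
  have hs : (-I * τ) ^ (1 / 2 : ℂ) ≠ 0 := by simp [cpow_eq_zero_iff, I_ne_zero, hτ₀]
  set w := z + τ / 2 + 1 / 2 with hw
  have hshift : z / τ + -1 / τ / 2 + 1 / 2 = w / τ + -1 / τ := by
    rw [hw]
    field_simp
    ring
  have hexp : qexp (-1 / τ / 8 + z / τ / 2) * cexp (-π * I * (-1 / τ + 2 * (w / τ))) =
      -I * qexp (z ^ 2 / (2 * τ)) * qexp (τ / 8 + z / 2) * cexp (-π * I * w ^ 2 / τ) := by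
    simp only [← qexp_neg_one_div_four, qexp, ← Complex.exp_add]
    congr 1
    rw [hw]
    field_simp
    ring
  rw [jtheta_eq_jacobiTheta₂, jtheta_eq_jacobiTheta₂, hshift, jacobiTheta₂_add_left',
    jacobiTheta₂_functional_equation w τ, ← mul_assoc, hexp]
  field_simp [hs]

end JacobiTheta

section Modularity

open UpperHalfPlane hiding I
open ModularGroup EisensteinSeries

lemma denom_mul (A B : SL2Z) (τ : ℍ) :
    denom (A * B : SL2Z) τ = denom A ↑(B • τ : ℍ) * denom B τ := by
  simpa [σ] using denom_cocycle_σ A B τ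

/-- The weight `k`, index `m` slash operator of Eichler–Zagier. The exponent `2πi·c/(cτ+d)` of its
automorphy factor is the quasimodular defect `D2` of the Eisenstein series `G2`. -/
def jacobiSlash (k : ℤ) (m : ℂ) (φ : ℍ → ℂ → ℂ) (A : SL2Z) (τ : ℍ) (z : ℂ) : ℂ :=
  denom A τ ^ (-k) * cexp (-(m * D2 A τ * z ^ 2)) * φ (A • τ) (z / denom A τ)

variable {k : ℤ} {m : ℂ} {φ : ℍ → ℂ → ℂ}

lemma jacobiSlash_one : jacobiSlash k m φ 1 = φ := by
  funext τ z
  simp [jacobiSlash]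

lemma jacobiSlash_mul (A B : SL2Z) :
    jacobiSlash k m φ (A * B) = jacobiSlash k m (jacobiSlash k m φ A) B := by
  funext τ z
  have hD2 : D2 (A * B) τ = D2 A (B • τ) / denom B τ ^ 2 + D2 B τ := by
    rw [D2_mul, Pi.add_apply, ModularForm.SL_slash_apply, _root_.zpow_neg, zpow_ofNat,
      div_eq_mul_inv]
  have hexp : -(m * D2 (A * B) τ * z ^ 2) =
      -(m * D2 B τ * z ^ 2) + -(m * D2 A (B • τ) * (z / denom B τ) ^ 2) := by
    rw [hD2]
    ring
  simp only [jacobiSlash]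
  rw [hexp, Complex.exp_add, denom_mul, mul_smul, mul_zpow, div_div, mul_comm (denom B τ)]
  ring

lemma jacobiSlash_eq_self (hS : jacobiSlash k m φ S = φ) (hT : jacobiSlash k m φ T = φ)
    (A : SL2Z) : jacobiSlash k m φ A = φ := by
  have hA : A ∈ Subgroup.closure {S, T} := by simp [SpecialLinearGroup.SL2Z_generators]
  induction hA using Subgroup.closure_induction with
  | mem B hB => rcases hB with rfl | rfl <;> assumption
  | one => exact jacobiSlash_one
  | mul B C _ _ hB hC => rw [jacobiSlash_mul, hB, hC]
  | inv B _ hB => rw [← hB, ← jacobiSlash_mul, mul_inv_cancel, jacobiSlash_one, hB]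

lemma smul_eq_of_jacobiSlash_eq_self {A : SL2Z} (h : jacobiSlash k m φ A = φ) (τ : ℍ) (z : ℂ) :
    φ (A • τ) (z / denom A τ) = denom A τ ^ k * cexp (m * D2 A τ * z ^ 2) * φ τ z := by
  have hdenom : denom A τ ≠ 0 := denom_ne_zero A τ
  rw [← congrFun (congrFun h τ) z, jacobiSlash, _root_.zpow_neg, Complex.exp_neg]
  field_simp

/-- `ϑ/η³`, a weak Jacobi form of weight `-1` and index `1/2` whose multiplier system is trivial
since those of `ϑ` and `η³` agree. -/
def normalizedTheta (τ : ℍ) (z : ℂ) : ℂ := jtheta τ z / dedekindEta τ ^ 3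

lemma jacobiSlash_normalizedTheta_S :
    jacobiSlash (-1) (1 / 2) normalizedTheta S = normalizedTheta := by
  funext τ z
  have hτ : (τ : ℂ) ≠ 0 := τ.ne_zero
  have hs : (-I * τ) ^ (1 / 2 : ℂ) ≠ 0 := by simp [cpow_eq_zero_iff, I_ne_zero, hτ]
  have hs_sq : ((-I * τ) ^ (1 / 2 : ℂ)) ^ 2 = -I * (τ : ℂ) := by
    rw [← Complex.cpow_nat_mul]
    norm_num
  have hsmul : ((S • τ : ℍ) : ℂ) = -1 / τ := by
    rw [modular_S_smul, coe_mk, inv_neg, neg_div, one_div]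
  have hexp : cexp (-(1 / 2 * (2 * π * I / τ) * z ^ 2)) * qexp (z ^ 2 / (2 * τ)) = 1 := by
    rw [qexp, ← Complex.exp_add]
    convert Complex.exp_zero using 2
    ring
  have hη := dedekindEta_ne_zero τ.im_pos
  rw [jacobiSlash, denom_S, D2_S, normalizedTheta, normalizedTheta, hsmul,
    jtheta_neg_one_div τ.im_pos, dedekindEta_neg_one_div τ.im_pos, neg_neg, zpow_one]
  generalize (-I * τ) ^ (1 / 2 : ℂ) = s at hs hs_sq ⊢
  calc
    _ = cexp (-(1 / 2 * (2 * π * I / τ) * z ^ 2)) * qexp (z ^ 2 / (2 * τ)) *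
          (-I * τ / s ^ 2) * (jtheta τ z / dedekindEta τ ^ 3) := by field_simp
    _ = jtheta τ z / dedekindEta τ ^ 3 := by
      rw [hexp, hs_sq, div_self (mul_ne_zero (neg_ne_zero.2 I_ne_zero) hτ), one_mul, one_mul]

lemma jacobiSlash_normalizedTheta_T :
    jacobiSlash (-1) (1 / 2) normalizedTheta T = normalizedTheta := by
  funext τ z
  have hsmul : ((T • τ : ℍ) : ℂ) = τ + 1 := by
    rw [modular_T_smul, coe_vadd, ofReal_one, add_comm]
  have hdenom : denom T τ = 1 := by rw [ModularGroup.denom_apply]; simp [T]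
  have hη : qexp (1 / 24) ^ 3 = qexp (1 / 8) := by
    rw [qexp_pow]
    norm_num
  have hq : qexp (1 / 8) ≠ 0 := Complex.exp_ne_zero _
  rw [jacobiSlash, hdenom, D2_T, normalizedTheta, normalizedTheta, hsmul, jtheta_add_one,
    dedekindEta_add_one, mul_pow, hη, div_one, mul_div_mul_left _ _ hq]
  simp

lemma normalizedTheta_smul (A : SL2Z) (τ : ℍ) (z : ℂ) :
    normalizedTheta (A • τ) (z / denom A τ) =
      denom A τ ^ (-1 : ℤ) * cexp (1 / 2 * D2 A τ * z ^ 2) * normalizedTheta τ z :=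
  smul_eq_of_jacobiSlash_eq_self
    (jacobiSlash_eq_self jacobiSlash_normalizedTheta_S jacobiSlash_normalizedTheta_T A) τ z

lemma thetaQuark_eq_normalizedTheta (a b : ℤ) (τ : ℍ) (z : ℂ) :
    thetaQuark a b τ z = dedekindEta τ ^ 8 * (normalizedTheta τ (a * z) *
      normalizedTheta τ (b * z) * normalizedTheta τ ((a + b) * z)) := by
  have hη := dedekindEta_ne_zero τ.im_pos
  simp only [thetaQuark, normalizedTheta]
  field_simp

lemma thetaQuark_smul (a b : ℤ) {A : SL2Z} {τ : ℍ} {v : ℂ}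
    (hv : dedekindEta ↑(A • τ) ^ 8 = v * denom A τ ^ 4 * dedekindEta τ ^ 8) (z : ℂ) :
    thetaQuark a b ↑(A • τ) (z / denom A τ) =
      v * denom A τ * cexp ((a ^ 2 + a * b + b ^ 2 : ℤ) * D2 A τ * z ^ 2) * thetaQuark a b τ z := by
  have hdenom : denom A τ ≠ 0 := denom_ne_zero A τ
  have hexp : cexp ((a ^ 2 + a * b + b ^ 2 : ℤ) * D2 A τ * z ^ 2) =
      cexp (1 / 2 * D2 A τ * (a * z) ^ 2) * cexp (1 / 2 * D2 A τ * (b * z) ^ 2) *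
        cexp (1 / 2 * D2 A τ * ((a + b) * z) ^ 2) := by
    rw [← Complex.exp_add, ← Complex.exp_add]
    push_cast
    ring_nf
  simp only [thetaQuark_eq_normalizedTheta, hv, hexp, mul_div_assoc', normalizedTheta_smul]
  field_simp

lemma thetaQuark_modular (a b : ℤ) {A : SL2Z} {τ : ℂ} (hτ : 0 < τ.im) {v : ℂ}
    (hv : dedekindEta ((A.1 0 0 * τ + A.1 0 1) / (A.1 1 0 * τ + A.1 1 1)) ^ 8 =
      v * (A.1 1 0 * τ + A.1 1 1) ^ 4 * dedekindEta τ ^ 8) (z : ℂ) :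
    thetaQuark a b ((A.1 0 0 * τ + A.1 0 1) / (A.1 1 0 * τ + A.1 1 1))
        (z / (A.1 1 0 * τ + A.1 1 1)) =
      v * (A.1 1 0 * τ + A.1 1 1) * cexp (2 * π * I * (a ^ 2 + a * b + b ^ 2 : ℤ) * A.1 1 0 *
        z ^ 2 / (A.1 1 0 * τ + A.1 1 1)) * thetaQuark a b τ z := by
  lift τ to ℍ using hτ
  have hdenom : (A.1 1 0 * τ + A.1 1 1 : ℂ) = denom A τ := (ModularGroup.denom_apply A τ).symm
  have hsmul : ((A • τ : ℍ) : ℂ) = (A.1 0 0 * τ + A.1 0 1) / denom A τ := by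
    rw [← hdenom, coe_specialLinearGroup_apply]
    simp
  rw [hdenom, ← hsmul] at hv ⊢
  rw [thetaQuark_smul a b hv, D2]
  ring_nf

end Modularity

section Macdonald

lemma hasSum_jtheta_mul_jtheta_mul_jtheta {τ : ℂ} (hτ : 0 < τ.im) (w₁ w₂ w₃ : ℂ) :
    HasSum (fun k : ℤ × ℤ × ℤ => (-1) ^ (k.1 + k.2.1 + k.2.2) *
        qexp (((2 * k.1 + 1) ^ 2 + (2 * k.2.1 + 1) ^ 2 + (2 * k.2.2 + 1) ^ 2) * τ / 8 +
          ((2 * k.1 + 1) * w₁ + (2 * k.2.1 + 1) * w₂ + (2 * k.2.2 + 1) * w₃) / 2))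
      (jtheta τ w₁ * jtheta τ w₂ * jtheta τ w₃) := by
  have h₁ := hasSum_jtheta hτ w₁
  have h₂ := hasSum_jtheta hτ w₂
  have h₃ := hasSum_jtheta hτ w₃
  have hsum₂₃ := summable_mul_of_summable_norm h₂.summable.norm h₃.summable.norm
  have hsum := summable_mul_of_summable_norm h₁.summable.norm hsum₂₃.norm
  rw [mul_assoc]
  refine (h₁.mul (h₂.mul h₃ hsum₂₃) hsum).congr_fun fun k => ?_
  have hexp : ((2 * k.1 + 1) ^ 2 + (2 * k.2.1 + 1) ^ 2 + (2 * k.2.2 + 1) ^ 2) * τ / 8 +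
      ((2 * k.1 + 1) * w₁ + (2 * k.2.1 + 1) * w₂ + (2 * k.2.2 + 1) * w₃) / 2 =
      ((2 * k.1 + 1) ^ 2 * τ / 8 + (2 * k.1 + 1) * w₁ / 2) +
        ((2 * k.2.1 + 1) ^ 2 * τ / 8 + (2 * k.2.1 + 1) * w₂ / 2) +
        ((2 * k.2.2 + 1) ^ 2 * τ / 8 + (2 * k.2.2 + 1) * w₃ / 2) := by
    ring
  rw [hexp, qexp_add, qexp_add, zpow_add₀ (by norm_num), zpow_add₀ (by norm_num)]
  ring

/-- The change of summation variables which turns the triple theta product into a sum over the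
weights `(x, y)` of `A₂`, with the sum over `t` giving `η`. -/
def weightFiberEquiv : (ℤ × ℤ) × ℤ ≃ ℤ × ℤ × ℤ where
  toFun p := (p.1.1 - 1 + p.2, p.1.2 - 1 + p.2, -p.2)
  invFun k := ((k.1 + k.2.2 + 1, k.2.1 + k.2.2 + 1), -k.2.2)
  left_inv p := by ext <;> simp
  right_inv k := by ext <;> simp

theorem hasSum_macdonald_A₂ {τ : ℂ} (hτ : 0 < τ.im) (w₁ w₂ : ℂ) :
    HasSum (fun p : ℤ × ℤ => -legendreSym 3 (p.1 + p.2) *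
        qexp ((p.1 ^ 2 - p.1 * p.2 + p.2 ^ 2) / 3 * τ + (p.1 * w₁ + p.2 * w₂)))
      (jtheta τ w₁ * jtheta τ w₂ * jtheta τ (w₁ + w₂) / dedekindEta τ) := by
  have hη := dedekindEta_ne_zero hτ
  have hprod := weightFiberEquiv.hasSum_iff.2
    (hasSum_jtheta_mul_jtheta_mul_jtheta hτ w₁ w₂ (w₁ + w₂))
  refine ((hprod.prod_fiberwise fun p => ?_).div_const (dedekindEta τ)).congr_fun
    fun p => (mul_div_cancel_right₀ _ hη).symm
  have hfiber := (hasSum_etaSeries hτ (2 * (p.1 + p.2) - 3)).mul_left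
    ((-1) ^ (p.1 + p.2) *
      qexp ((p.1 ^ 2 - p.1 * p.2 + p.2 ^ 2) / 3 * τ + (p.1 * w₁ + p.2 * w₂)))
  rw [mul_right_comm, neg_one_zpow_mul_etaSeries hτ, mul_right_comm] at hfiber
  refine hfiber.congr_fun fun t => ?_
  simp only [Function.comp_apply, weightFiberEquiv, Equiv.coe_fn_mk]
  rw [mul_mul_mul_comm, ← zpow_add₀ (by norm_num), ← qexp_add,
    neg_one_zpow_eq_of_even_sub (n := p.1 + p.2 + t) ⟨-1, by ring⟩]
  push_cast
  ring_nf

end Macdonald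

section ThetaQuark

variable (a b : ℤ)

lemma thetaQuark_add_lattice (l μ : ℤ) (τ z : ℂ) :
    thetaQuark a b τ (z + l * τ + μ) =
      cexp (-(2 * π * I * (a ^ 2 + a * b + b ^ 2 : ℤ)) * (l ^ 2 * τ + 2 * l * z)) *
        thetaQuark a b τ z := by
  have h (c : ℤ) : jtheta τ (c * (z + l * τ + μ)) = (-1) ^ (c * (l + μ)) *
      qexp (-(c ^ 2 * (l ^ 2 * τ + 2 * l * z)) / 2) * jtheta τ (c * z) := by
    rw [show (c : ℂ) * (z + l * τ + μ) = c * z + (c * l : ℤ) * τ + (c * μ : ℤ) by push_cast; ring,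
      jtheta_add_lattice, ← mul_add]
    push_cast
    ring_nf
  have hsign :
      (-1 : ℂ) ^ (a * (l + μ)) * (-1) ^ (b * (l + μ)) * (-1) ^ ((a + b) * (l + μ)) = 1 := by
    rw [← zpow_add₀ (by norm_num), ← zpow_add₀ (by norm_num),
      neg_one_zpow_eq_of_even_sub (n := 0) ⟨(a + b) * (l + μ), by ring⟩, zpow_zero]
  have hexp : cexp (-(2 * π * I * (a ^ 2 + a * b + b ^ 2 : ℤ)) * (l ^ 2 * τ + 2 * l * z)) =
      qexp (-(a ^ 2 * (l ^ 2 * τ + 2 * l * z)) / 2) *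
        qexp (-(b ^ 2 * (l ^ 2 * τ + 2 * l * z)) / 2) *
        qexp (-((a + b : ℤ) ^ 2 * (l ^ 2 * τ + 2 * l * z)) / 2) := by
    rw [← qexp_add, ← qexp_add, qexp]
    push_cast
    ring_nf
  have hab := h (a + b)
  rw [Int.cast_add] at hab
  rw [thetaQuark, thetaQuark, h, h, hab, hexp, Int.cast_add]
  linear_combination (qexp (-(a ^ 2 * (l ^ 2 * τ + 2 * l * z)) / 2) *
    qexp (-(b ^ 2 * (l ^ 2 * τ + 2 * l * z)) / 2) *
    qexp (-((a + b) ^ 2 * (l ^ 2 * τ + 2 * l * z)) / 2) *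
    (jtheta τ (a * z) * jtheta τ (b * z) * jtheta τ ((a + b) * z) / dedekindEta τ)) * hsign

lemma differentiableOn_thetaQuark :
    DifferentiableOn ℂ (fun p : ℂ × ℂ => thetaQuark a b p.1 p.2) {p | 0 < p.1.im} := by
  rintro ⟨τ, z⟩ (hτ : 0 < τ.im)
  have hθ (c : ℂ) : DifferentiableAt ℂ (fun p : ℂ × ℂ => jtheta p.1 (c * p.2)) (τ, z) :=
    .comp (τ, z) (f := fun p : ℂ × ℂ => (p.1, c * p.2)) (differentiableAt_jtheta hτ (c * z))
      (by fun_prop)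
  have hη : DifferentiableAt ℂ (fun p : ℂ × ℂ => dedekindEta p.1) (τ, z) :=
    .comp (τ, z) (differentiableAt_dedekindEta hτ) differentiableAt_fst
  simp only [thetaQuark, div_eq_mul_inv]
  exact ((((hθ a).fun_mul (hθ b)).fun_mul (hθ (a + b))).fun_mul
    (hη.fun_inv (dedekindEta_ne_zero hτ))).differentiableWithinAt

lemma hasSum_thetaQuark {τ : ℂ} (hτ : 0 < τ.im) (z : ℂ) :
    HasSum (fun p : ℤ × ℤ => -legendreSym 3 (p.1 + p.2) *
        qexp ((p.1 ^ 2 - p.1 * p.2 + p.2 ^ 2) / 3 * τ + (a * p.1 + b * p.2) * z))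
      (thetaQuark a b τ z) := by
  have h := hasSum_macdonald_A₂ hτ (a * z) (b * z)
  rw [← add_mul] at h
  exact h.congr_fun fun p => by ring_nf

end ThetaQuark

section FourierExpansion

lemma hasSum_tsum_fiber_mul {𝕜 α β : Type*} [NormedDivisionRing 𝕜] [CompleteSpace 𝕜] {g : α → 𝕜}
    {f : α → β} {h : β → 𝕜} {s : 𝕜} (hs : HasSum (fun i => g i * h (f i)) s) :
    HasSum (fun y => (∑' i : f ⁻¹' {y}, g i) * h y) s := by
  refine (hs.tsum_fiberwise f).congr_fun fun y => ?_
  rw [← tsum_mul_right]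
  exact tsum_congr fun i => by rw [i.2]

variable {a b : ℤ}

variable (a b) in
/-- The exponent `(n, r)` of the term `qⁿ ζʳ` which the weight `(x, y)` of `A₂` contributes to
`θ_{a,b}`. -/
def thetaQuarkExponent (p : ℤ × ℤ) : ℚ × ℚ :=
  ((p.1 ^ 2 - p.1 * p.2 + p.2 ^ 2) / 3, a * p.1 + b * p.2)

variable (a b) in
/-- The Fourier coefficient `c(n, r)` of `θ_{a,b}`, which collects the weights of `A₂` contributing
to `qⁿ ζʳ`. -/
def thetaQuarkCoeff (p : ℚ × ℚ) : ℂ :=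
  ∑' w : thetaQuarkExponent a b ⁻¹' {p}, (-legendreSym 3 (w.1.1 + w.1.2) : ℂ)

lemma hasSum_thetaQuarkCoeff {τ : ℂ} (hτ : 0 < τ.im) (z : ℂ) :
    HasSum (fun p => thetaQuarkCoeff a b p * cexp (2 * π * I * (p.1 * τ + p.2 * z)))
      (thetaQuark a b τ z) :=
  hasSum_tsum_fiber_mul (f := thetaQuarkExponent a b)
    (g := fun w => (-legendreSym 3 (w.1 + w.2) : ℂ))
    (h := fun p => cexp (2 * π * I * (p.1 * τ + p.2 * z))) <|
      (hasSum_thetaQuark a b hτ z).congr_fun fun w => by simp [thetaQuarkExponent, qexp]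

lemma exists_thetaQuarkExponent_eq_of_coeff_ne_zero {p : ℚ × ℚ} (hp : thetaQuarkCoeff a b p ≠ 0) :
    ∃ w : ℤ × ℤ, ¬ 3 ∣ w.1 + w.2 ∧ thetaQuarkExponent a b w = p := by
  contrapose! hp
  refine (tsum_congr fun w => ?_).trans tsum_zero
  have hdvd : 3 ∣ w.1.1 + w.1.2 := by_contra fun h => hp w.1 h w.2
  rw [(legendreSym.eq_zero_iff 3 _).2 ((ZMod.intCast_zmod_eq_zero_iff_dvd _ 3).2 hdvd),
    Int.cast_zero, neg_zero]

lemma hyperbolicNorm_thetaQuarkExponent (w : ℤ × ℤ) :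
    4 * (thetaQuarkExponent a b w).1 * (a ^ 2 + a * b + b ^ 2 : ℤ) -
        (thetaQuarkExponent a b w).2 ^ 2 =
      (((a + 2 * b) * w.1 - (2 * a + b) * w.2 : ℤ) : ℚ) ^ 2 / 3 := by
  simp only [thetaQuarkExponent]
  push_cast
  ring

lemma thetaQuarkExponent_nonneg (w : ℤ × ℤ) : 0 ≤ (thetaQuarkExponent a b w).1 := by
  refine div_nonneg ?_ zero_le_three
  nlinarith [sq_nonneg ((w.1 : ℚ) - w.2), sq_nonneg (w.1 : ℚ), sq_nonneg (w.2 : ℚ)]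

lemma thetaQuarkCoeff_support_nonneg {p : ℚ × ℚ} (hp : thetaQuarkCoeff a b p ≠ 0) :
    0 ≤ p.1 ∧ (∃ j : ℤ, 2 * p.2 = j) ∧ 0 ≤ 4 * p.1 * (a ^ 2 + a * b + b ^ 2 : ℤ) - p.2 ^ 2 := by
  obtain ⟨w, -, rfl⟩ := exists_thetaQuarkExponent_eq_of_coeff_ne_zero hp
  refine ⟨thetaQuarkExponent_nonneg w, ⟨2 * (a * w.1 + b * w.2), by simp [thetaQuarkExponent]⟩, ?_⟩
  rw [hyperbolicNorm_thetaQuarkExponent]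
  positivity

lemma thetaQuarkCoeff_support_pos (hab : ¬ a ≡ b [ZMOD 3]) {p : ℚ × ℚ}
    (hp : thetaQuarkCoeff a b p ≠ 0) : 0 < 4 * p.1 * (a ^ 2 + a * b + b ^ 2 : ℤ) - p.2 ^ 2 := by
  obtain ⟨w, hw, rfl⟩ := exists_thetaQuarkExponent_eq_of_coeff_ne_zero hp
  have hne : (a + 2 * b) * w.1 - (2 * a + b) * w.2 ≠ 0 := fun h => by
    have hdvd : 3 ∣ (b - a) * (w.1 + w.2) :=
      ⟨b * w.1 - a * w.2, by linear_combination -h⟩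
    exact (Int.prime_three.dvd_or_dvd hdvd).elim (hab <| Int.modEq_iff_dvd.2 ·) hw
  rw [hyperbolicNorm_thetaQuarkExponent]
  exact div_pos (sq_pos_iff.2 (Int.cast_ne_zero.2 hne)) three_pos

end FourierExpansion

theorem statement17_general (a b : ℤ) (vη8 : SL2Z → ℂ)
    (hvη8 : ∀ A : SL2Z, ∀ τ : ℂ, 0 < τ.im →
      dedekindEta (((A.1 0 0 : ℂ) * τ + (A.1 0 1 : ℂ)) / ((A.1 1 0 : ℂ) * τ + (A.1 1 1 : ℂ))) ^ 8
        = vη8 A * ((A.1 1 0 : ℂ) * τ + (A.1 1 1 : ℂ)) ^ 4 * dedekindEta τ ^ 8) :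
    (∀ A : SL2Z, ∀ τ : ℂ, 0 < τ.im → ∀ z : ℂ,
      thetaQuark a b (((A.1 0 0 : ℂ) * τ + (A.1 0 1 : ℂ)) / ((A.1 1 0 : ℂ) * τ + (A.1 1 1 : ℂ)))
          (z / ((A.1 1 0 : ℂ) * τ + (A.1 1 1 : ℂ)))
        = vη8 A * ((A.1 1 0 : ℂ) * τ + (A.1 1 1 : ℂ))
          * Complex.exp (2 * (π : ℂ) * I * ((a ^ 2 + a * b + b ^ 2 : ℤ) : ℂ) * (A.1 1 0 : ℂ)
              * z ^ 2 / ((A.1 1 0 : ℂ) * τ + (A.1 1 1 : ℂ)))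
          * thetaQuark a b τ z) ∧
    (∀ lam mu : ℤ, ∀ τ : ℂ, 0 < τ.im → ∀ z : ℂ,
      thetaQuark a b τ (z + (lam : ℂ) * τ + (mu : ℂ))
        = Complex.exp (-(2 * (π : ℂ) * I * ((a ^ 2 + a * b + b ^ 2 : ℤ) : ℂ))
            * ((lam : ℂ) ^ 2 * τ + 2 * (lam : ℂ) * z))
          * thetaQuark a b τ z) ∧
    DifferentiableOn ℂ (fun p : ℂ × ℂ => thetaQuark a b p.1 p.2) {p | 0 < p.1.im} ∧
    ∃ c : ℚ × ℚ → ℂ,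
      (∀ p, c p ≠ 0 →
        0 ≤ p.1 ∧ (∃ j : ℤ, 2 * p.2 = (j : ℚ)) ∧
        0 ≤ 4 * p.1 * ((a ^ 2 + a * b + b ^ 2 : ℤ) : ℚ) - p.2 ^ 2) ∧
      (∀ τ : ℂ, 0 < τ.im → ∀ z : ℂ,
        HasSum (fun p : ℚ × ℚ =>
            c p * Complex.exp (2 * (π : ℂ) * I * ((p.1 : ℂ) * τ + (p.2 : ℂ) * z)))
          (thetaQuark a b τ z)) ∧
      (¬ a ≡ b [ZMOD 3] → ∀ p, c p ≠ 0 →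
        0 < 4 * p.1 * ((a ^ 2 + a * b + b ^ 2 : ℤ) : ℚ) - p.2 ^ 2) :=
  ⟨fun A τ hτ z => thetaQuark_modular a b hτ (hvη8 A τ hτ) z,
    fun l μ τ _ z => thetaQuark_add_lattice a b l μ τ z,
    differentiableOn_thetaQuark a b,
    thetaQuarkCoeff a b,
    fun _ hp => thetaQuarkCoeff_support_nonneg hp,
    fun _ hτ z => hasSum_thetaQuarkCoeff hτ z,
    fun hab _ hp => thetaQuarkCoeff_support_pos hab hp⟩

/-- For positive integers `a, b` and `m = a²+ab+b²`, the theta-quark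
`θ_{a,b}` is a holomorphic Jacobi form of weight `1` and index `m` in the sense of
Eichler–Zagier, with character `v_η^8`; it is a cusp form whenever `a ≢ b (mod 3)`. -/
theorem statement17 (a b : ℤ) (ha : 0 < a) (hb : 0 < b)
    (vη8 : SL2Z → ℂ)
    (hvη8 : ∀ A : SL2Z, ∀ τ : ℂ, 0 < τ.im →
      dedekindEta (((A.1 0 0 : ℂ) * τ + (A.1 0 1 : ℂ)) / ((A.1 1 0 : ℂ) * τ + (A.1 1 1 : ℂ))) ^ 8
        = vη8 A * ((A.1 1 0 : ℂ) * τ + (A.1 1 1 : ℂ)) ^ 4 * dedekindEta τ ^ 8) :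
    (∀ A : SL2Z, ∀ τ : ℂ, 0 < τ.im → ∀ z : ℂ,
      thetaQuark a b (((A.1 0 0 : ℂ) * τ + (A.1 0 1 : ℂ)) / ((A.1 1 0 : ℂ) * τ + (A.1 1 1 : ℂ)))
          (z / ((A.1 1 0 : ℂ) * τ + (A.1 1 1 : ℂ)))
        = vη8 A * ((A.1 1 0 : ℂ) * τ + (A.1 1 1 : ℂ))
          * Complex.exp (2 * (π : ℂ) * I * ((a ^ 2 + a * b + b ^ 2 : ℤ) : ℂ) * (A.1 1 0 : ℂ)
              * z ^ 2 / ((A.1 1 0 : ℂ) * τ + (A.1 1 1 : ℂ)))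
          * thetaQuark a b τ z) ∧
    (∀ lam mu : ℤ, ∀ τ : ℂ, 0 < τ.im → ∀ z : ℂ,
      thetaQuark a b τ (z + (lam : ℂ) * τ + (mu : ℂ))
        = Complex.exp (-(2 * (π : ℂ) * I * ((a ^ 2 + a * b + b ^ 2 : ℤ) : ℂ))
            * ((lam : ℂ) ^ 2 * τ + 2 * (lam : ℂ) * z))
          * thetaQuark a b τ z) ∧
    DifferentiableOn ℂ (fun p : ℂ × ℂ => thetaQuark a b p.1 p.2) {p | 0 < p.1.im} ∧
    ∃ c : ℚ × ℚ → ℂ,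
      (∀ p, c p ≠ 0 →
        0 ≤ p.1 ∧ (∃ j : ℤ, 2 * p.2 = (j : ℚ)) ∧
        0 ≤ 4 * p.1 * ((a ^ 2 + a * b + b ^ 2 : ℤ) : ℚ) - p.2 ^ 2) ∧
      (∀ τ : ℂ, 0 < τ.im → ∀ z : ℂ,
        HasSum (fun p : ℚ × ℚ =>
            c p * Complex.exp (2 * (π : ℂ) * I * ((p.1 : ℂ) * τ + (p.2 : ℂ) * z)))
          (thetaQuark a b τ z)) ∧
      (¬ a ≡ b [ZMOD 3] → ∀ p, c p ≠ 0 →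
        0 < 4 * p.1 * ((a ^ 2 + a * b + b ^ 2 : ℤ) : ℚ) - p.2 ^ 2) :=
  statement17_general a b vη8 hvη8
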